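/- Let M = (S, A, δ) be a finite fuzzy transition system with discount factor γ ∈ (0,1), and let d* : S × S → [0,1] be any fixpoint of Δ, i.e., Δ(d*) = d*. Then for every n ∈ ℕ, ‖Δ^n(⊥) − d*‖ ≤ γ^n · ‖⊥ − d*‖ ≤ γ^n. -/

import Mathlib

/-!
`Δ` is `γ`-Lipschitz for the sup norm, so iterating it from `⊥` approaches a fixpoint at rate `γ ^ n`.

Every operation out of which `Δ` is built (`min` with a fixed number, finite maxima and minima,
infima over the fixed feasible set) is monotone and subadditive in adding a constant `c ≥ 0`.
Hence `d ≤ d' + c` pointwise implies `Δ(d) ≤ Δ(d') + γ c` pointwise (`Delta_le_add`), and using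
this in both directions with `c = ‖d - d'‖` gives the Lipschitz bound `dnorm_Delta_le`.
The second inequality is `‖⊥ - d*‖ ≤ 1`, because `d*` takes values in `[0,1]`.
-/

open Finset
open scoped Classical

noncomputable section

variable {S A : Type*} [Fintype S] [Nonempty S] [Fintype A] [Nonempty A]

/-- The maximum value of a fuzzy subset `μ : S → ℝ` over the finite nonempty set `S`. -/
def maxS (μ : S → ℝ) : ℝ := Finset.univ.sup' Finset.univ_nonempty μ

/-- Feasibility for the mathematical program defining the lifted distance. -/
def Feasible (μ η : S → ℝ) (x : S → S → ℝ) : Prop :=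
  (∀ u v, 0 ≤ x u v) ∧ (∀ u, maxS (x u) = μ u) ∧ (∀ v, maxS (fun u => x u v) = η v)

/-- The lifted distance `d̂(μ,η)` induced by `d` on fuzzy subsets. -/
def liftDist (d : S → S → ℝ) (μ η : S → ℝ) : ℝ :=
  if maxS μ = maxS η then
    sInf {r : ℝ | ∃ x : S → S → ℝ, Feasible μ η x ∧
      r = Finset.univ.sup' Finset.univ_nonempty
            (fun p : S × S => min (d p.1 p.2) (x p.1 p.2))}
  else 1

/-- Distance from a fuzzy subset to a finite set of fuzzy subsets. -/
def liftDistSet (d : S → S → ℝ) (μ : S → ℝ) (W : Finset (S → ℝ)) : ℝ :=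
  if h : W.Nonempty then W.inf' h (liftDist d μ) else 1

/-- Max of `f` over a finite set of fuzzy subsets, `0` if the set is empty. -/
def sup0 (Y : Finset (S → ℝ)) (f : (S → ℝ) → ℝ) : ℝ :=
  if h : Y.Nonempty then Y.sup' h f else 0

/-- Hausdorff distance induced by `d` on finite sets of fuzzy subsets. -/
def Hdist (d : S → S → ℝ) (Y Z : Finset (S → ℝ)) : ℝ :=
  if Y = ∅ ∧ Z = ∅ then 0
  else max (sup0 Y fun μ => liftDistSet d μ Z) (sup0 Z fun ν => liftDistSet d ν Y)

/-- The functional `Δ` with discount factor `γ` on a fuzzy transition system `δ`. -/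
def Delta (γ : ℝ) (δ : S → A → Finset (S → ℝ)) (d : S → S → ℝ) : S → S → ℝ :=
  fun s t => γ * Finset.univ.sup' Finset.univ_nonempty (fun a => Hdist d (δ s a) (δ t a))

/-- All fuzzy subsets occurring in the transition function take values in `[0,1]`. -/
def FTSvalid (δ : S → A → Finset (S → ℝ)) : Prop :=
  ∀ s a, ∀ μ ∈ δ s a, ∀ u, μ u ∈ Set.Icc (0:ℝ) 1

/-- The set `Θ_M` of membership values occurring in the system, together with `0` and `1`. -/
def ThetaM (δ : S → A → Finset (S → ℝ)) : Set ℝ :=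
  {r : ℝ | ∃ s a μ, μ ∈ δ s a ∧ ∃ u, μ u = r} ∪ {0, 1}

/-- The supremum norm of the difference of two distance functions. -/
def dnorm (d d' : S → S → ℝ) : ℝ :=
  Finset.univ.sup' Finset.univ_nonempty (fun p : S × S => |d p.1 p.2 - d' p.1 p.2|)

end

section Nonexpansive

variable {S A : Type*} [Fintype S] [Nonempty S] [Fintype A] [Nonempty A]

lemma sup'_le_sup'_add {ι : Type*} {s : Finset ι} (hs : s.Nonempty) {f g : ι → ℝ} {c : ℝ}
    (h : ∀ i ∈ s, f i ≤ g i + c) : s.sup' hs f ≤ s.sup' hs g + c :=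
  Finset.sup'_le hs f fun i hi => (h i hi).trans (by gcongr; exact Finset.le_sup' g hi)

lemma inf'_le_inf'_add {ι : Type*} {s : Finset ι} (hs : s.Nonempty) {f g : ι → ℝ} {c : ℝ}
    (h : ∀ i ∈ s, f i ≤ g i + c) : s.inf' hs f ≤ s.inf' hs g + c := by
  obtain ⟨i, hi, hgi⟩ := s.exists_mem_eq_inf' hs g
  rw [hgi]
  exact (Finset.inf'_le f hi).trans (h i hi)

lemma liftDist_le_add {d d' : S → S → ℝ} {c : ℝ} (hc : 0 ≤ c)
    (h : ∀ s t, d s t ≤ d' s t + c) (μ η : S → ℝ) :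
    liftDist d μ η ≤ liftDist d' μ η + c := by
  unfold liftDist
  split_ifs with hmax
  · by_cases hx : ∃ x, Feasible μ η x
    · obtain ⟨x₀, hx₀⟩ := hx
      rw [← sub_le_iff_le_add]
      refine le_csInf ⟨_, x₀, hx₀, rfl⟩ ?_
      rintro r ⟨x, hxf, rfl⟩
      rw [sub_le_iff_le_add]
      refine le_trans (csInf_le ?_ ⟨x, hxf, rfl⟩) (sup'_le_sup'_add _ fun p _ => ?_)
      · -- Since `x ≥ 0`, the entry at any one pair `(s₀, s₀)` bounds the objective from below.
        obtain ⟨s₀⟩ := ‹Nonempty S›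
        refine ⟨min (d s₀ s₀) 0, ?_⟩
        rintro r ⟨y, hy, rfl⟩
        exact (min_le_min_left _ (hy.1 s₀ s₀)).trans
          (Finset.le_sup' (fun p : S × S => min (d p.1 p.2) (y p.1 p.2))
            (Finset.mem_univ (s₀, s₀)))
      · rw [← min_add_add_right]
        exact min_le_min (h _ _) (by linarith)
    · -- Without a feasible `x` both infima are over `∅`, hence equal to `0`.
      have hempty : ∀ e : S → S → ℝ, {r : ℝ | ∃ x : S → S → ℝ, Feasible μ η x ∧
          r = Finset.univ.sup' Finset.univ_nonempty
            (fun p : S × S => min (e p.1 p.2) (x p.1 p.2))} = ∅ := fun e =>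
        Set.eq_empty_of_forall_notMem fun r hr => hx ⟨_, hr.choose_spec.1⟩
      rw [hempty, hempty]
      linarith
  · linarith

lemma liftDistSet_le_add {d d' : S → S → ℝ} {c : ℝ} (hc : 0 ≤ c)
    (h : ∀ s t, d s t ≤ d' s t + c) (μ : S → ℝ) (W : Finset (S → ℝ)) :
    liftDistSet d μ W ≤ liftDistSet d' μ W + c := by
  unfold liftDistSet
  split_ifs with hW
  · exact inf'_le_inf'_add hW fun η _ => liftDist_le_add hc h μ η
  · linarith

lemma sup0_le_add {T : Type*} {c : ℝ} (hc : 0 ≤ c) (Y : Finset (T → ℝ)) {f g : (T → ℝ) → ℝ}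
    (h : ∀ μ, f μ ≤ g μ + c) : sup0 Y f ≤ sup0 Y g + c := by
  unfold sup0
  split_ifs with hY
  · exact sup'_le_sup'_add hY fun μ _ => h μ
  · linarith

lemma Hdist_le_add {d d' : S → S → ℝ} {c : ℝ} (hc : 0 ≤ c)
    (h : ∀ s t, d s t ≤ d' s t + c) (Y Z : Finset (S → ℝ)) :
    Hdist d Y Z ≤ Hdist d' Y Z + c := by
  unfold Hdist
  split_ifs with hYZ
  · linarith
  · rw [← max_add_add_right]
    exact max_le_max (sup0_le_add hc Y fun μ => liftDistSet_le_add hc h μ Z)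
      (sup0_le_add hc Z fun ν => liftDistSet_le_add hc h ν Y)

lemma Delta_le_add {γ : ℝ} (hγ : 0 ≤ γ) (δ : S → A → Finset (S → ℝ)) {d d' : S → S → ℝ} {c : ℝ}
    (hc : 0 ≤ c) (h : ∀ s t, d s t ≤ d' s t + c) (s t : S) :
    Delta γ δ d s t ≤ Delta γ δ d' s t + γ * c := by
  unfold Delta
  rw [← mul_add]
  exact mul_le_mul_of_nonneg_left
    (sup'_le_sup'_add _ fun a _ => Hdist_le_add hc h (δ s a) (δ t a)) hγ

lemma abs_sub_le_dnorm (d d' : S → S → ℝ) (s t : S) : |d s t - d' s t| ≤ dnorm d d' :=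
  Finset.le_sup' (fun p : S × S => |d p.1 p.2 - d' p.1 p.2|) (Finset.mem_univ (s, t))

lemma dnorm_le {d d' : S → S → ℝ} {c : ℝ} (h : ∀ s t, |d s t - d' s t| ≤ c) : dnorm d d' ≤ c :=
  Finset.sup'_le _ _ fun p _ => h p.1 p.2

lemma dnorm_Delta_le {γ : ℝ} (hγ : 0 ≤ γ) (δ : S → A → Finset (S → ℝ)) (d d' : S → S → ℝ) :
    dnorm (Delta γ δ d) (Delta γ δ d') ≤ γ * dnorm d d' := by
  have hle := fun s t => abs_le.1 (abs_sub_le_dnorm d d' s t)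
  have hc : 0 ≤ dnorm d d' := by
    obtain ⟨s₀⟩ := ‹Nonempty S›
    exact (abs_nonneg _).trans (abs_sub_le_dnorm d d' s₀ s₀)
  refine dnorm_le fun s t => abs_le.2 ⟨?_, ?_⟩
  · linarith [Delta_le_add hγ δ (d := d') (d' := d) hc (fun s t => by linarith [(hle s t).1]) s t]
  · linarith [Delta_le_add hγ δ (d := d) (d' := d') hc (fun s t => by linarith [(hle s t).2]) s t]

end Nonexpansive

/-- for a discount factor `γ ∈ (0,1)` and any fixpoint `d*` of `Δ`,
for every `n`, `‖Δ^n(⊥) − d*‖ ≤ γ^n · ‖⊥ − d*‖ ≤ γ^n`. -/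
theorem iterate_dist_to_fixpoint {S A : Type*} [Fintype S] [Nonempty S] [Fintype A] [Nonempty A]
    (γ : ℝ) (hγ : γ ∈ Set.Ioo (0:ℝ) 1)
    (δ : S → A → Finset (S → ℝ)) (hδ : FTSvalid δ)
    (dstar : S → S → ℝ)
    (hdstar01 : ∀ s t, dstar s t ∈ Set.Icc (0:ℝ) 1)
    (hfix : Delta γ δ dstar = dstar) :
    ∀ n : ℕ,
      dnorm ((Delta γ δ)^[n] (fun _ _ => 0)) dstar
          ≤ γ^n * dnorm (fun _ _ => 0) dstar ∧
      γ^n * dnorm (fun _ _ => 0) dstar ≤ γ^n := by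
  have hone : dnorm (fun _ _ => 0) dstar ≤ 1 := dnorm_le fun s t => by
    rw [zero_sub, abs_neg, abs_of_nonneg (hdstar01 s t).1]
    exact (hdstar01 s t).2
  intro n
  refine ⟨?_, mul_le_of_le_one_right (pow_nonneg hγ.1.le n) hone⟩
  induction n with
  | zero => simp
  | succ n ih =>
    rw [Function.iterate_succ_apply']
    calc dnorm (Delta γ δ ((Delta γ δ)^[n] fun _ _ => 0)) dstar
        = dnorm (Delta γ δ ((Delta γ δ)^[n] fun _ _ => 0)) (Delta γ δ dstar) := by rw [hfix]
      _ ≤ γ * dnorm ((Delta γ δ)^[n] fun _ _ => 0) dstar := dnorm_Delta_le hγ.1.le δ _ _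
      _ ≤ γ * (γ ^ n * dnorm (fun _ _ => 0) dstar) := mul_le_mul_of_nonneg_left ih hγ.1.le
      _ = γ ^ (n + 1) * dnorm (fun _ _ => 0) dstar := by ring
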